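/- There is an absolute constant c > 0 such that the following holds. Let q ≥ 2 be an even integer, let n ≥ 2, and let C : {-1,1}^k → {-1,1}^n be a (q, δ, ε)-normally decodable code. Then k ≤ c · n^{1 - 2/q} · (log n) / (ε^2 · δ^2). -/

import Mathlib

open Finset
open scoped Classical

noncomputable section

/-- The map sending a Boolean to the corresponding element of `{-1, 1} ⊆ ℝ`. -/
def pmo (b : Bool) : ℝ := if b then 1 else -1

/-- `H` is a `q`-uniform hypergraph matching on `[n]`. -/
def IsMatching {n : ℕ} (q : ℕ) (H : Finset (Finset (Fin n))) : Prop :=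
  (∀ C ∈ H, C.card = q) ∧ Set.Pairwise (H : Set (Finset (Fin n))) Disjoint

/-- A code is `(q, δ, ε)`-normally decodable. -/
def NormallyDecodable (q k n : ℕ) (δ ε : ℝ)
    (Enc : (Fin k → Bool) → Fin n → Bool) : Prop :=
  ∃ H : Fin k → Finset (Finset (Fin n)),
    (∀ i, IsMatching q (H i)) ∧
    (∀ i, δ * n ≤ ((H i).card : ℝ)) ∧
    (∀ i, ∀ C ∈ H i,
      (1 / 2 + ε : ℝ) ≤
        ((Finset.univ.filter (fun b : Fin k → Bool =>
          pmo (b i) = ∏ v ∈ C, pmo (Enc b v))).card : ℝ) / 2 ^ k)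

/-!
Fix an even `q = 2m`. Each hyperedge `C` of `H i` joins the `l`-subsets `S` and `T = S ∆ C` of `[n]`
whenever `C` meets `S` in exactly `m` points; let `A i` be the adjacency matrix of this Kikuchi
graph. For a message `b`, let `z` be the vector `z S = ∏ v ∈ S, Enc b v`, so that
`z S * z T = ∏ v ∈ C, Enc b v` on such an edge. Decodability then makes the quadratic form of
`∑ i, b i • A i` at `z` at least `2 ε` times the total number of edges, on average over `b`. On the
other hand, once the few vertices of large degree are deleted, a trace moment bound (matrix
Khintchine) shows that the signed sum `∑ i, b i • A i` has norm of order
`degree * √(k * l * log n)`. Comparing the two bounds gives `k ≲ l * log n / (ε * δ) ^ 2` as soon as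
a matching with `n` edges would produce average degree at least `1 / 2`, and `l ≈ n ^ (1 - 1 / m)`
achieves this. When `n` is too small for that choice of `l`, using one hyperedge per message bit and
the graph on all subsets of `[n]` is enough.
-/

-- `‖M‖` is the `ℓ^∞` operator norm: for the adjacency matrix of a graph, the maximum degree.
open scoped BigOperators Matrix Matrix.Norms.Operator symmDiff

section Rademacher

theorem pmo_sq (b : Bool) : pmo b ^ 2 = 1 := by
  cases b <;> simp [pmo]

variable {κ : Type*} [Fintype κ] [DecidableEq κ]

theorem expect_prod_apply {σ : Type*} [Fintype σ] (f : κ → σ → ℝ) :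
    𝔼 b : κ → σ, ∏ i, f i (b i) = ∏ i, 𝔼 c, f i c := by
  simp only [Fintype.expect_eq_sum_div_card, prod_div_distrib, prod_const, card_univ,
    Fintype.card_fun, Nat.cast_pow, prod_univ_sum, Fintype.piFinset_univ]

theorem expect_prod_pmo_nonneg {ι : Type*} [Fintype ι] (w : ι → κ) :
    0 ≤ 𝔼 b : κ → Bool, ∏ j, pmo (b (w j)) := by
  have hfiber (b : κ → Bool) :
      ∏ j, pmo (b (w j)) = ∏ i, pmo (b i) ^ #{j | w j = i} := by
    rw [← prod_fiberwise univ w]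
    refine prod_congr rfl fun i _ => prod_eq_pow_card fun j hj => ?_
    rw [(mem_filter.1 hj).2]
  simp only [hfiber, expect_prod_apply fun i c => pmo c ^ #{j | w j = i}]
  refine prod_nonneg fun i _ => ?_
  rw [Fintype.expect_eq_sum_div_card, Fintype.sum_bool]
  rcases neg_one_pow_eq_or ℝ #{j | w j = i} with h | h <;> simp [pmo, h]

theorem expect_exp_mul_sum_pmo (θ : ℝ) :
    𝔼 b : κ → Bool, Real.exp (θ * ∑ i, pmo (b i)) = Real.cosh θ ^ Fintype.card κ := by
  simp only [mul_sum, Real.exp_sum, expect_prod_apply fun _ c => Real.exp (θ * pmo c)]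
  rw [Fintype.expect_eq_sum_div_card, Fintype.sum_bool]
  simp [pmo, Real.cosh_eq, div_pow]

theorem expect_cosh_mul_sum_pmo (θ : ℝ) :
    𝔼 b : κ → Bool, Real.cosh (θ * ∑ i, pmo (b i)) = Real.cosh θ ^ Fintype.card κ := by
  simp only [Real.cosh_eq (θ * _), ← neg_mul, ← expect_div, expect_add_distrib,
    expect_exp_mul_sum_pmo, Real.cosh_neg, add_self_div_two]

theorem pow_two_mul_le_factorial_mul_cosh (x : ℝ) (p : ℕ) :
    x ^ (2 * p) ≤ (2 * p).factorial * Real.cosh x := by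
  rw [← div_le_iff₀' (by positivity)]
  refine le_hasSum (Real.hasSum_cosh x) p fun r _ => ?_
  rw [pow_mul]
  positivity

/-- The moment is read off the exponential moment at `θ ^ 2 = 2 * p / card κ`, the value for which
`cosh θ ^ card κ ≤ exp (card κ * θ ^ 2 / 2)` costs exactly `exp p`. -/
theorem expect_sum_pmo_pow_le (p : ℕ) :
    𝔼 b : κ → Bool, (∑ i, pmo (b i)) ^ (2 * p) ≤
      (2 * Real.exp 1 * p * Fintype.card κ) ^ p := by
  rcases p.eq_zero_or_pos with rfl | hp
  · simp
  rcases isEmpty_or_nonempty κ with hκ | hκ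
  · simp [hp.ne']
  set k : ℝ := (Fintype.card κ : ℝ) with hk
  have hk0 : 0 < k := by simp [hk, Fintype.card_pos]
  set θ : ℝ := √(2 * p / k)
  have hθ : θ ^ 2 = 2 * p / k := Real.sq_sqrt (by positivity)
  have hcosh : Real.cosh θ ^ Fintype.card κ ≤ Real.exp 1 ^ p :=
    calc Real.cosh θ ^ Fintype.card κ
        ≤ Real.exp (θ ^ 2 / 2) ^ Fintype.card κ :=
          pow_le_pow_left₀ (Real.cosh_pos θ).le (Real.cosh_le_exp_half_sq θ) _
      _ = Real.exp 1 ^ p := by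
          rw [← Real.exp_nat_mul, ← Real.exp_nat_mul, ← hk, hθ]
          congr 1
          field_simp
  have hfact : ((2 * p).factorial : ℝ) ≤ (2 * p : ℝ) ^ (2 * p) := by
    exact_mod_cast Nat.factorial_le_pow (2 * p)
  have hmoment : (2 * p / k) ^ p * 𝔼 b : κ → Bool, (∑ i, pmo (b i)) ^ (2 * p) ≤
      (2 * p : ℝ) ^ (2 * p) * Real.exp 1 ^ p :=
    calc (2 * p / k) ^ p * 𝔼 b : κ → Bool, (∑ i, pmo (b i)) ^ (2 * p)
        = 𝔼 b : κ → Bool, (θ * ∑ i, pmo (b i)) ^ (2 * p) := by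
          simp only [mul_pow, pow_mul θ, hθ, mul_expect]
      _ ≤ 𝔼 b : κ → Bool, (2 * p).factorial * Real.cosh (θ * ∑ i, pmo (b i)) :=
          expect_le_expect fun b _ => pow_two_mul_le_factorial_mul_cosh _ p
      _ = (2 * p).factorial * Real.cosh θ ^ Fintype.card κ := by
          rw [← mul_expect, expect_cosh_mul_sum_pmo]
      _ ≤ _ := by gcongr
  refine le_of_mul_le_mul_left (hmoment.trans_eq ?_) (show 0 < (2 * p / k) ^ p by positivity)
  rw [pow_mul, ← mul_pow, ← mul_pow]
  congr 1
  field_simp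

end Rademacher

section Matrix

variable {κ Ω : Type*} [Fintype κ] [Fintype Ω]

theorem sum_smul_pow {R A : Type*} [CommSemiring R] [Semiring A] [Algebra R A]
    (x : κ → R) (a : κ → A) (m : ℕ) :
    (∑ i, x i • a i) ^ m =
      ∑ w : Fin m → κ, (∏ j, x (w j)) • (List.ofFn fun j => a (w j)).prod := by
  rw [← MultilinearMap.mkPiAlgebraFin_apply_const (R := R), MultilinearMap.map_sum]
  simp only [MultilinearMap.map_smul_univ, MultilinearMap.mkPiAlgebraFin_apply]

theorem trace_le_card_mul_norm (A : Matrix Ω Ω ℝ) : A.trace ≤ Fintype.card Ω * ‖A‖ := by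
  have hdiag (S : Ω) : A S S ≤ ‖A‖ :=
    calc A S S ≤ ∑ T, ‖A S T‖ :=
          (Real.le_norm_self _).trans
            (single_le_sum (f := fun T => ‖A S T‖) (fun _ _ => norm_nonneg _) (mem_univ S))
      _ ≤ ‖A‖ := by
          rw [Matrix.linfty_opNorm_def]
          simpa only [NNReal.coe_sum, coe_nnnorm] using
            NNReal.coe_le_coe.2 (le_sup (f := fun S => ∑ T, ‖A S T‖₊) (mem_univ S))
  simpa [Matrix.trace] using sum_le_sum fun S (_ : S ∈ univ) => hdiag S

theorem norm_list_prod_ofFn_le {ι : Type*} [DecidableEq Ω] [Nonempty Ω] {M : ι → Matrix Ω Ω ℝ}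
    {t : ℝ} (hM : ∀ i, ‖M i‖ ≤ t) {m : ℕ} (w : Fin m → ι) :
    ‖(List.ofFn fun j => M (w j)).prod‖ ≤ t ^ m := by
  refine (List.norm_prod_le _).trans ?_
  rw [List.map_ofFn, List.prod_ofFn]
  simpa using prod_le_prod (fun j _ => norm_nonneg (M (w j))) fun j (_ : j ∈ univ) => hM (w j)

theorem expect_trace_pow_le [DecidableEq κ] [DecidableEq Ω] [Nonempty Ω]
    {M : κ → Matrix Ω Ω ℝ} {t : ℝ} (hM : ∀ i, ‖M i‖ ≤ t) (m : ℕ) :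
    𝔼 b : κ → Bool, ((∑ i, pmo (b i) • M i) ^ m).trace ≤
      Fintype.card Ω * t ^ m * 𝔼 b : κ → Bool, (∑ i, pmo (b i)) ^ m := by
  simp only [sum_smul_pow, Fintype.sum_pow, Matrix.trace_sum, Matrix.trace_smul, smul_eq_mul,
    expect_sum_comm, ← expect_mul, mul_sum]
  refine sum_le_sum fun w _ => ?_
  rw [mul_comm]
  gcongr
  · exact expect_prod_pmo_nonneg w
  · exact (trace_le_card_mul_norm _).trans (by gcongr; exact norm_list_prod_ofFn_le hM w)

theorem dotProduct_pow_mulVec_eq_sum_eigenvalues [DecidableEq Ω] {A : Matrix Ω Ω ℝ}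
    (hA : A.IsHermitian) (z : Ω → ℝ) (m : ℕ) :
    z ⬝ᵥ (A ^ m) *ᵥ z =
      ∑ i, ((star (hA.eigenvectorUnitary : Matrix Ω Ω ℝ) *ᵥ z) i) ^ 2 * hA.eigenvalues i ^ m := by
  set U : Matrix Ω Ω ℝ := (hA.eigenvectorUnitary : Matrix Ω Ω ℝ)
  have hU : z ᵥ* U = star U *ᵥ z := by
    rw [Matrix.star_eq_conjTranspose, Matrix.conjTranspose_eq_transpose_of_trivial,
      Matrix.mulVec_transpose]
  conv_lhs => rw [hA.spectral_theorem, ← map_pow, Matrix.diagonal_pow]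
  rw [Unitary.conjStarAlgAut_apply, ← Matrix.mulVec_mulVec, ← Matrix.mulVec_mulVec,
    Matrix.dotProduct_mulVec, hU]
  simp only [dotProduct, Matrix.mulVec_diagonal]
  refine sum_congr rfl fun i _ => ?_
  simp only [RCLike.ofReal_real_eq_id, CompTriple.comp_eq, Pi.pow_apply]
  ring

theorem trace_pow_eq_sum_eigenvalues [DecidableEq Ω] {A : Matrix Ω Ω ℝ}
    (hA : A.IsHermitian) (m : ℕ) : (A ^ m).trace = ∑ i, hA.eigenvalues i ^ m := by
  conv_lhs => rw [hA.spectral_theorem, ← map_pow, Matrix.diagonal_pow]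
  rw [Unitary.conjStarAlgAut_apply, Matrix.trace_mul_cycle]
  simp

theorem dotProduct_mulVec_pow_le [DecidableEq Ω] {A : Matrix Ω Ω ℝ} (hA : A.IsHermitian)
    (z : Ω → ℝ) {m : ℕ} (hm : Even m) (hm0 : m ≠ 0) :
    (z ⬝ᵥ A *ᵥ z) ^ m ≤ (z ⬝ᵥ z) ^ m * (A ^ m).trace := by
  set y : Ω → ℝ := star (hA.eigenvectorUnitary : Matrix Ω Ω ℝ) *ᵥ z
  have hform : z ⬝ᵥ A *ᵥ z = ∑ i, y i ^ 2 * hA.eigenvalues i := by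
    simpa using dotProduct_pow_mulVec_eq_sum_eigenvalues hA z 1
  have hnorm : z ⬝ᵥ z = ∑ i, y i ^ 2 := by
    simpa using dotProduct_pow_mulVec_eq_sum_eigenvalues hA z 0
  rw [hform, hnorm, trace_pow_eq_sum_eigenvalues hA]
  set Y : ℝ := ∑ i, y i ^ 2
  have hyY (i : Ω) : y i ^ 2 ≤ Y :=
    single_le_sum (f := fun i => y i ^ 2) (fun i _ => sq_nonneg (y i)) (mem_univ i)
  have hY0 : 0 ≤ Y := sum_nonneg fun i _ => sq_nonneg (y i)
  rcases hY0.eq_or_lt' with hY | hY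
  · have hy0 (i : Ω) : y i ^ 2 = 0 := le_antisymm ((hyY i).trans_eq hY) (sq_nonneg _)
    simp [hy0, hY, hm0]
  have hweights : ∑ i, y i ^ 2 / Y = 1 := by rw [← sum_div, div_self hY.ne']
  calc (∑ i, y i ^ 2 * hA.eigenvalues i) ^ m
      = Y ^ m * (∑ i, y i ^ 2 / Y * hA.eigenvalues i) ^ m := by
        rw [← mul_pow, mul_sum]
        refine congrArg (· ^ m) (sum_congr rfl fun i _ => ?_)
        field_simp
    _ ≤ Y ^ m * ∑ i, y i ^ 2 / Y * hA.eigenvalues i ^ m := by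
        gcongr
        exact Real.pow_arith_mean_le_arith_mean_pow_of_even _ _ _
          (fun i _ => by positivity) hweights hm
    _ ≤ Y ^ m * ∑ i, hA.eigenvalues i ^ m := by
        gcongr with i
        exact mul_le_of_le_one_left (hm.pow_nonneg _) (div_le_one_of_le₀ (hyY i) hY.le)

end Matrix

theorem expect_pow_le_expect_pow {ι : Type*} [Fintype ι] [Nonempty ι] (f : ι → ℝ) {m : ℕ}
    (hm : Even m) : (𝔼 i, f i) ^ m ≤ 𝔼 i, f i ^ m := by
  simp only [Fintype.expect_eq_sum_div_card, div_eq_inv_mul, mul_sum]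
  exact Real.pow_arith_mean_le_arith_mean_pow_of_even _ _ _ (fun i _ => by positivity)
    (by simp) hm

theorem sq_expect_dotProduct_mulVec_le {κ Ω : Type*} [Fintype κ] [DecidableEq κ] [Fintype Ω]
    [Nonempty Ω] {M : κ → Matrix Ω Ω ℝ} {t : ℝ} (hM : ∀ i, (M i).IsHermitian)
    (hMt : ∀ i, ‖M i‖ ≤ t) {z : (κ → Bool) → Ω → ℝ} (hz : ∀ b, z b ⬝ᵥ z b = Fintype.card Ω)
    {p : ℕ} (hp : p ≠ 0) (hlog : Real.log (Fintype.card Ω) ≤ p) :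
    (𝔼 b : κ → Bool, z b ⬝ᵥ (∑ i, pmo (b i) • M i) *ᵥ z b) ^ 2 ≤
      2 * Real.exp 1 ^ 2 * p * Fintype.card κ * (t * Fintype.card Ω) ^ 2 := by
  set A : (κ → Bool) → Matrix Ω Ω ℝ := fun b => ∑ i, pmo (b i) • M i
  set N : ℝ := (Fintype.card Ω : ℝ)
  have hA (b) : (A b).IsHermitian := by
    simp only [A, Matrix.IsHermitian, Matrix.conjTranspose_sum, Matrix.conjTranspose_smul,
      star_trivial, (hM _).eq]
  have hN : N ≤ Real.exp 1 ^ p := by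
    rw [← Real.exp_nat_mul, mul_one]
    exact (Real.log_le_iff_le_exp (by positivity)).1 hlog
  refine le_of_pow_le_pow_left₀ hp (by positivity) ?_
  calc ((𝔼 b, z b ⬝ᵥ A b *ᵥ z b) ^ 2) ^ p
      ≤ 𝔼 b, (z b ⬝ᵥ A b *ᵥ z b) ^ (2 * p) := by
        rw [← pow_mul]
        exact expect_pow_le_expect_pow _ (even_two_mul p)
    _ ≤ 𝔼 b, N ^ (2 * p) * (A b ^ (2 * p)).trace := by
        refine expect_le_expect fun b _ => ?_
        rw [← hz b]
        exact dotProduct_mulVec_pow_le (hA b) (z b) (even_two_mul p) (by positivity)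
    _ = N ^ (2 * p) * 𝔼 b, (A b ^ (2 * p)).trace := by rw [mul_expect]
    _ ≤ N ^ (2 * p) * (N * t ^ (2 * p) * 𝔼 b : κ → Bool, (∑ i, pmo (b i)) ^ (2 * p)) := by
        gcongr
        exact expect_trace_pow_le hMt _
    _ ≤ N ^ (2 * p) * (Real.exp 1 ^ p * t ^ (2 * p) *
          (2 * Real.exp 1 * p * Fintype.card κ) ^ p) := by
        have := expect_sum_pmo_pow_le (κ := κ) p
        rw [pow_mul t]
        gcongr
        exact expect_nonneg fun b _ => (even_two_mul p).pow_nonneg _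
    _ = (2 * Real.exp 1 ^ 2 * p * Fintype.card κ * (t * N) ^ 2) ^ p := by
        rw [pow_mul, pow_mul, ← mul_pow, ← mul_pow, ← mul_pow]
        ring

theorem expect_dotProduct_sum_smul_mulVec {κ Ω : Type*} [Fintype κ] [DecidableEq κ] [Fintype Ω]
    (M : κ → Matrix Ω Ω ℝ) (z : (κ → Bool) → Ω → ℝ) :
    𝔼 b : κ → Bool, z b ⬝ᵥ (∑ i, pmo (b i) • M i) *ᵥ z b =
      ∑ i, ∑ S, ∑ T, M i S T * 𝔼 b : κ → Bool, pmo (b i) * (z b S * z b T) := by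
  have hquad (b : κ → Bool) : z b ⬝ᵥ (∑ i, pmo (b i) • M i) *ᵥ z b =
      ∑ i, ∑ S, ∑ T, M i S T * (pmo (b i) * (z b S * z b T)) := by
    simp only [Matrix.sum_mulVec, Matrix.smul_mulVec, dotProduct_sum, dotProduct_smul]
    simp only [dotProduct, Matrix.mulVec, smul_eq_mul, mul_sum]
    refine sum_congr rfl fun i _ => sum_congr rfl fun S _ => sum_congr rfl fun T _ => ?_
    ring
  simp only [hquad, expect_sum_comm, mul_expect]

theorem card_mul_sq_le_of_norm_le {κ Ω : Type*} [Fintype κ] [DecidableEq κ] [Fintype Ω]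
    [Nonempty Ω] {M : κ → Matrix Ω Ω ℝ} {t γ ε : ℝ} (hM : ∀ i, (M i).IsHermitian)
    (hM0 : ∀ i S T, 0 ≤ M i S T) (hMt : ∀ i, ‖M i‖ ≤ t) (hγ : 0 ≤ γ) (hε : 0 ≤ ε)
    (hmass : ∀ i, γ * Fintype.card Ω ≤ ∑ S, ∑ T, M i S T) {z : (κ → Bool) → Ω → ℝ}
    (hz : ∀ b S, z b S ^ 2 = 1)
    (hcorr : ∀ i S T, M i S T ≠ 0 → 2 * ε ≤ 𝔼 b : κ → Bool, pmo (b i) * (z b S * z b T))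
    {p : ℕ} (hp : p ≠ 0) (hlog : Real.log (Fintype.card Ω) ≤ p) :
    Fintype.card κ * (ε * γ) ^ 2 ≤ 4 * p * t ^ 2 := by
  rcases isEmpty_or_nonempty κ with hκ | hκ
  · simp only [Fintype.card_eq_zero, CharP.cast_eq_zero, zero_mul]
    positivity
  set k : ℝ := (Fintype.card κ : ℝ) with hk
  set N : ℝ := (Fintype.card Ω : ℝ) with hN
  have hk0 : 0 < k := by simp [hk, Fintype.card_pos]
  have hN0 : 0 < N := by simp [hN, Fintype.card_pos]
  have hupper := sq_expect_dotProduct_mulVec_le hM hMt (z := z)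
    (fun b => by simp [dotProduct, ← sq, hz]) hp hlog
  have hlower : 2 * ε * (k * (γ * N)) ≤
      𝔼 b : κ → Bool, z b ⬝ᵥ (∑ i, pmo (b i) • M i) *ᵥ z b :=
    calc 2 * ε * (k * (γ * N)) = ∑ _i : κ, γ * N * (2 * ε) := by
          simp only [sum_const, card_univ, nsmul_eq_mul, ← hk]
          ring
      _ ≤ ∑ i, (∑ S, ∑ T, M i S T) * (2 * ε) := by gcongr with i; exact hmass i
      _ ≤ ∑ i, ∑ S, ∑ T, M i S T * 𝔼 b : κ → Bool, pmo (b i) * (z b S * z b T) := by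
          simp only [sum_mul]
          refine sum_le_sum fun i _ => sum_le_sum fun S _ => sum_le_sum fun T _ => ?_
          rcases eq_or_ne (M i S T) 0 with h | h
          · simp [h]
          · exact mul_le_mul_of_nonneg_left (hcorr i S T h) (hM0 i S T)
      _ = _ := (expect_dotProduct_sum_smul_mulVec M z).symm
  have he : Real.exp 1 ^ 2 ≤ 8 := by nlinarith [Real.exp_one_lt_d9, Real.exp_pos 1]
  have hsq := (pow_le_pow_left₀ (by positivity) hlower 2).trans hupper
  have hcancel : 4 * k * N ^ 2 * (k * (ε * γ) ^ 2) ≤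
      4 * k * N ^ 2 * (Real.exp 1 ^ 2 / 2 * p * t ^ 2) := by linarith
  calc k * (ε * γ) ^ 2 ≤ Real.exp 1 ^ 2 / 2 * p * t ^ 2 :=
        le_of_mul_le_mul_left hcancel (mul_pos (mul_pos four_pos hk0) (pow_pos hN0 2))
    _ ≤ 4 * p * t ^ 2 := by gcongr; linarith

section Truncate

variable {Ω : Type*} [Fintype Ω] {M : Matrix Ω Ω ℝ} {t : ℝ}

/-- The matrix obtained from `M` by zeroing every row and every column whose index has row sum
larger than `t`. For a symmetric adjacency matrix this deletes the vertices of degree more than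
`t`, which controls the operator norm. -/
def truncate (M : Matrix Ω Ω ℝ) (t : ℝ) : Matrix Ω Ω ℝ :=
  Matrix.of fun S T => if ∑ U, M S U ≤ t ∧ ∑ U, M T U ≤ t then M S T else 0

theorem truncate_apply (S T : Ω) :
    truncate M t S T = if ∑ U, M S U ≤ t ∧ ∑ U, M T U ≤ t then M S T else 0 :=
  rfl

theorem truncate_nonneg (hM0 : ∀ S T, 0 ≤ M S T) (S T : Ω) : 0 ≤ truncate M t S T := by
  rw [truncate_apply]
  split_ifs
  exacts [hM0 S T, le_rfl]

theorem isHermitian_truncate (hM : M.IsHermitian) : (truncate M t).IsHermitian := by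
  ext S T
  have := hM.apply S T
  simp_all [truncate_apply, and_comm]

theorem norm_truncate_le (hM0 : ∀ S T, 0 ≤ M S T) (ht : 0 ≤ t) : ‖truncate M t‖ ≤ t := by
  have hrow (S : Ω) : ∑ T, truncate M t S T ≤ t := by
    by_cases hS : ∑ U, M S U ≤ t
    · refine (sum_le_sum fun T _ => ?_).trans hS
      rw [truncate_apply]
      split_ifs
      exacts [le_rfl, hM0 S T]
    · simp [truncate_apply, hS, ht]
  lift t to NNReal using ht
  rw [Matrix.linfty_opNorm_def, NNReal.coe_le_coe]
  refine Finset.sup_le fun S _ => ?_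
  rw [← NNReal.coe_le_coe, NNReal.coe_sum]
  simpa only [coe_nnnorm, Real.norm_of_nonneg (truncate_nonneg hM0 S _)] using hrow S

/-- By Markov: an entry survives unless the row sum `d` at one of its indices exceeds `t`, so it
loses at most the fraction `d S / t + d T / t`. -/
theorem sum_le_two_mul_sum_truncate (hM : M.IsHermitian) (hM0 : ∀ S T, 0 ≤ M S T) (ht : 0 < t)
    (hsq : 4 * ∑ S, (∑ T, M S T) ^ 2 ≤ t * ∑ S, ∑ T, M S T) :
    ∑ S, ∑ T, M S T ≤ 2 * ∑ S, ∑ T, truncate M t S T := by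
  set d : Ω → ℝ := fun S => ∑ T, M S T
  have hd0 (S : Ω) : 0 ≤ d S := sum_nonneg fun T _ => hM0 S T
  have hentry (S T : Ω) : M S T * (1 - d S / t - d T / t) ≤ truncate M t S T := by
    have hS : 0 ≤ d S / t := div_nonneg (hd0 S) ht.le
    have hT : 0 ≤ d T / t := div_nonneg (hd0 T) ht.le
    rw [truncate_apply]
    split_ifs with h
    · exact mul_le_of_le_one_right (hM0 S T) (by linarith)
    · refine mul_nonpos_of_nonneg_of_nonpos (hM0 S T) ?_
      rcases not_and_or.1 h with h | h <;>
        linarith [(one_lt_div ht).2 (not_le.1 h)]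
  have hrow : ∑ S, ∑ T, M S T * d S = ∑ S, d S ^ 2 := by
    simp only [← sum_mul, sq, d]
  have hcol : ∑ S, ∑ T, M S T * d T = ∑ S, d S ^ 2 := by
    rw [sum_comm, ← hrow]
    refine sum_congr rfl fun T _ => sum_congr rfl fun S _ => ?_
    rw [← hM.apply S T, star_trivial]
  have hsum : ∑ S, ∑ T, M S T * (1 - d S / t - d T / t) =
      ∑ S, d S - 2 * (∑ S, d S ^ 2) / t := by
    simp only [mul_sub, mul_one, sum_sub_distrib, mul_div_assoc', ← sum_div, hrow, hcol]
    ring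
  have hloss : 2 * (∑ S, d S ^ 2) / t ≤ (∑ S, d S) / 2 := by
    rw [div_le_div_iff₀ ht two_pos]
    linarith
  have hkept : ∑ S, ∑ T, M S T * (1 - d S / t - d T / t) ≤ ∑ S, ∑ T, truncate M t S T :=
    sum_le_sum fun S _ => sum_le_sum fun T _ => hentry S T
  linarith

end Truncate

theorem card_mul_sq_le_of_sum_sq_le {κ Ω : Type*} [Fintype κ] [DecidableEq κ] [Fintype Ω]
    [Nonempty Ω] {M : κ → Matrix Ω Ω ℝ} {t γ ε : ℝ} (hM : ∀ i, (M i).IsHermitian)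
    (hM0 : ∀ i S T, 0 ≤ M i S T) (ht : 0 < t) (hγ : 0 ≤ γ) (hε : 0 ≤ ε)
    (hmass : ∀ i, γ * Fintype.card Ω ≤ ∑ S, ∑ T, M i S T)
    (hsq : ∀ i, 4 * ∑ S, (∑ T, M i S T) ^ 2 ≤ t * ∑ S, ∑ T, M i S T)
    {z : (κ → Bool) → Ω → ℝ} (hz : ∀ b S, z b S ^ 2 = 1)
    (hcorr : ∀ i S T, M i S T ≠ 0 → 2 * ε ≤ 𝔼 b : κ → Bool, pmo (b i) * (z b S * z b T))
    {p : ℕ} (hp : p ≠ 0) (hlog : Real.log (Fintype.card Ω) ≤ p) :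
    Fintype.card κ * (ε * γ) ^ 2 ≤ 16 * p * t ^ 2 := by
  have hhalf (i : κ) : γ / 2 * Fintype.card Ω ≤ ∑ S, ∑ T, truncate (M i) t S T := by
    linarith [hmass i, sum_le_two_mul_sum_truncate (hM i) (hM0 i) ht (hsq i)]
  have htrunc := card_mul_sq_le_of_norm_le (fun i => isHermitian_truncate (hM i))
    (fun i => truncate_nonneg (hM0 i)) (fun i => norm_truncate_le (hM0 i) ht.le)
    (div_nonneg hγ zero_le_two) hε hhalf hz
    (fun i S T h => hcorr i S T fun h0 => h (by simp [truncate_apply, h0])) hp hlog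
  linarith

section Walsh

variable {α : Type*}

/-- The Walsh character `∏ v ∈ S, x v` of a point `x` of the Boolean cube. -/
def walsh (S : Finset α) (x : α → Bool) : ℝ := ∏ v ∈ S, pmo (x v)

theorem walsh_sq (S : Finset α) (x : α → Bool) : walsh S x ^ 2 = 1 := by
  simp [walsh, ← prod_pow, pmo_sq]

theorem walsh_mul_walsh [DecidableEq α] (S T : Finset α) (x : α → Bool) :
    walsh S x * walsh T x = walsh (S ∆ T) x := by
  have hsplit (A B : Finset α) : walsh A x = walsh (A \ B) x * walsh (A ∩ B) x := by
    rw [walsh, ← prod_sdiff (inter_subset_left : A ∩ B ⊆ A), sdiff_inter_self_left]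
    rfl
  have hunion : walsh (S ∆ T) x = walsh (S \ T) x * walsh (T \ S) x :=
    prod_union disjoint_sdiff_sdiff
  rw [hsplit S T, hsplit T S, hunion, inter_comm T S]
  linear_combination walsh (S \ T) x * walsh (T \ S) x * walsh_sq (S ∩ T) x

theorem two_mul_le_expect_mul_walsh {κ : Type*} [Fintype κ] [DecidableEq κ]
    {x : (κ → Bool) → α → Bool} {i : κ} {C : Finset α} {ε : ℝ}
    (h : 1 / 2 + ε ≤ #{b : κ → Bool | pmo (b i) = walsh C (x b)} / 2 ^ Fintype.card κ) :
    2 * ε ≤ 𝔼 b : κ → Bool, pmo (b i) * walsh C (x b) := by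
  have hsign (b : κ → Bool) : pmo (b i) * walsh C (x b) =
      2 * (if pmo (b i) = walsh C (x b) then 1 else 0) - 1 := by
    rcases sq_eq_sq_iff_eq_or_eq_neg.1 ((pmo_sq (b i)).trans (walsh_sq C (x b)).symm) with hb | hb
    · rw [if_pos hb, hb, ← sq, walsh_sq]
      norm_num
    · have hne : walsh C (x b) ≠ 0 := by
        intro h0
        simpa [h0] using walsh_sq C (x b)
      rw [if_neg (by rw [hb]; exact neg_ne_self.2 hne), hb]
      linear_combination -walsh_sq C (x b)
  rw [Fintype.expect_eq_sum_div_card]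
  simp only [hsign, sum_sub_distrib, ← mul_sum, sum_boole, sum_const, card_univ,
    Fintype.card_fun, Fintype.card_bool, nsmul_eq_mul, Nat.cast_pow, Nat.cast_ofNat, mul_one,
    sub_div, mul_div_assoc]
  rw [div_self (by positivity)]
  linarith

end Walsh

section Kikuchi

variable {α : Type*}

/-- The Kikuchi graph of a hypergraph `H` on the vertex set `V`, as a `0`-`1` adjacency matrix:
`S` and `T` are joined when their symmetric difference is an edge of `H`. -/
def kikuchiMatrix [DecidableEq α] (V H : Finset (Finset α)) : Matrix V V ℝ :=
  Matrix.of fun S T => if (S : Finset α) ∆ T ∈ H then 1 else 0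

theorem sum_kikuchiMatrix [DecidableEq α] (V H : Finset (Finset α)) (S : V) :
    ∑ T, kikuchiMatrix V H S T = #{C ∈ H | (S : Finset α) ∆ C ∈ V} := by
  simp only [kikuchiMatrix, Matrix.of_apply]
  rw [sum_coe_sort V fun T => if (S : Finset α) ∆ T ∈ H then (1 : ℝ) else 0, sum_boole]
  congr 1
  refine card_nbij' (S.1 ∆ ·) (S.1 ∆ ·) ?_ ?_ ?_ ?_ <;>
    simp +contextual [Set.MapsTo, Set.LeftInvOn, symmDiff_symmDiff_cancel_left]

theorem card_mul_sq_le_of_kikuchiMatrix {κ : Type*} [Fintype κ] [DecidableEq κ] [DecidableEq α]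
    {V : Finset (Finset α)} (hV : V.Nonempty) {H : κ → Finset (Finset α)}
    {x : (κ → Bool) → α → Bool} {t γ ε : ℝ}
    (ht : 0 < t) (hγ : 0 ≤ γ) (hε : 0 ≤ ε)
    (hagree : ∀ i, ∀ C ∈ H i, 1 / 2 + ε ≤
      #{b : κ → Bool | pmo (b i) = walsh C (x b)} / 2 ^ Fintype.card κ)
    (hmass : ∀ i, γ * #V ≤ ∑ S, ∑ T, kikuchiMatrix V (H i) S T)
    (hsq : ∀ i, 4 * ∑ S, (∑ T, kikuchiMatrix V (H i) S T) ^ 2 ≤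
      t * ∑ S, ∑ T, kikuchiMatrix V (H i) S T)
    {p : ℕ} (hp : p ≠ 0) (hlog : Real.log #V ≤ p) :
    Fintype.card κ * (ε * γ) ^ 2 ≤ 16 * p * t ^ 2 := by
  have := hV.to_subtype
  rw [← Fintype.card_coe] at hlog
  refine card_mul_sq_le_of_sum_sq_le (M := fun i => kikuchiMatrix V (H i))
    (z := fun b S => walsh (S : Finset α) (x b)) (fun i => ?_) (fun i S T => ?_) ht hγ hε
    (by simpa using hmass) hsq (fun b S => walsh_sq _ _) (fun i S T h => ?_) hp hlog
  · ext S T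
    simp [kikuchiMatrix, symmDiff_comm]
  · simp only [kikuchiMatrix, Matrix.of_apply]
    split_ifs <;> norm_num
  · simp only [walsh_mul_walsh]
    refine two_mul_le_expect_mul_walsh (hagree i _ ?_)
    simpa [kikuchiMatrix] using h

end Kikuchi

section Counting

theorem choose_mul_choose_mul_choose_two_mul {u l m : ℕ} (hml : m ≤ l) :
    (2 * m).choose m * (u - 2 * m).choose (l - m) * u.choose (2 * m) =
      u.choose l * l.choose m * (u - l).choose m := by
  have hcentral := Nat.choose_mul (n := u) (k := 2 * m) (s := m) (by lia)
  have hfar := Nat.choose_mul (n := u - m) (k := l) (s := m) hml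
  have hnear := Nat.choose_mul (n := u) (k := m + l) (s := m) (by lia)
  have hlevel := Nat.choose_mul (n := u) (k := m + l) (s := l) (by lia)
  rw [Nat.choose_symm_add] at hnear
  simp only [Nat.add_sub_cancel, Nat.add_sub_cancel_left, two_mul, Nat.sub_sub] at *
  calc (m + m).choose m * (u - (m + m)).choose (l - m) * u.choose (m + m)
      = u.choose m * ((u - m).choose m * (u - (m + m)).choose (l - m)) := by
        rw [← mul_assoc, ← hcentral]
        ring
    _ = u.choose m * (u - m).choose l * l.choose m := by rw [← hfar, mul_assoc]
    _ = u.choose l * (u - l).choose m * l.choose m := by rw [← hnear, hlevel]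
    _ = u.choose l * l.choose m * (u - l).choose m := mul_right_comm _ _ _

theorem pow_le_two_mul_descFactorial_sub {n a r : ℕ} (h : 2 * r * (a + r) ≤ n) :
    n ^ r ≤ 2 * (n - a).descFactorial r := by
  rcases r.eq_zero_or_pos with rfl | hr
  · simp
  have har : a + r ≤ n := by nlinarith
  have hn : (0 : ℝ) < n := by exact_mod_cast (by lia : 0 < n)
  have hfrac : (r : ℝ) * ((a + r) / n) ≤ 1 / 2 := by
    rw [mul_div_assoc', div_le_div_iff₀ hn two_pos]
    exact_mod_cast (by linarith : r * (a + r) * 2 ≤ 1 * n)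
  have hle_one : (a + r : ℝ) / n ≤ 1 := div_le_one_of_le₀ (by exact_mod_cast har) hn.le
  have hbernoulli := one_add_mul_le_pow (a := -((a + r : ℝ) / n)) (by linarith) r
  have hhalf : (n : ℝ) ^ r ≤ 2 * (n - (a + r)) ^ r :=
    calc (n : ℝ) ^ r ≤ n ^ r * (2 * (1 + -((a + r : ℝ) / n)) ^ r) :=
          le_mul_of_one_le_right (by positivity) (by linarith)
      _ = 2 * (n - (a + r)) ^ r := by
          rw [mul_left_comm, ← mul_pow]
          congr 2
          field_simp
          ring
  have hdesc : (n - (a + r)) ^ r ≤ (n - a).descFactorial r :=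
    (Nat.pow_le_pow_left (by lia) r).trans (Nat.pow_sub_le_descFactorial (n - a) r)
  have hcast : n ^ r ≤ 2 * (n - (a + r)) ^ r := by
    rify [har]
    exact hhalf
  exact hcast.trans (Nat.mul_le_mul_left 2 hdesc)

theorem choose_two_mul_le {n m : ℕ} (h : 16 * m ^ 2 ≤ n) :
    n.choose (2 * m) ≤ 2 * (n - 2 * m).choose (2 * m) := by
  refine Nat.le_of_mul_le_mul_left ?_ (2 * m).factorial_pos
  calc (2 * m).factorial * n.choose (2 * m) = n.descFactorial (2 * m) :=
        (Nat.descFactorial_eq_factorial_mul_choose n (2 * m)).symm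
    _ ≤ n ^ (2 * m) := Nat.descFactorial_le_pow n (2 * m)
    _ ≤ 2 * (n - 2 * m).descFactorial (2 * m) := pow_le_two_mul_descFactorial_sub (by linarith)
    _ = (2 * m).factorial * (2 * (n - 2 * m).choose (2 * m)) := by
        rw [Nat.descFactorial_eq_factorial_mul_choose, mul_left_comm]

theorem log_choose_le {n l : ℕ} (hl : l ≤ n) : Real.log (n.choose l) ≤ l * Real.log n := by
  have hpos : (0 : ℝ) < n.choose l := Nat.cast_pos.2 (Nat.choose_pos hl)
  rw [← Real.log_pow]
  gcongr
  exact_mod_cast n.choose_le_pow l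

theorem pow_mul_descFactorial_le {m l : ℕ} (hml : m ≤ l) (r : ℕ) :
    l ^ r * m.descFactorial r ≤ m ^ r * l.descFactorial r := by
  simp only [Nat.descFactorial_eq_prod_range, pow_eq_prod_const, ← prod_mul_distrib]
  refine prod_le_prod' fun i _ => ?_
  rw [Nat.mul_sub, Nat.mul_sub, mul_comm l m]
  exact Nat.sub_le_sub_left (Nat.mul_le_mul_right i hml) (m * l)

theorem pow_le_pow_mul_choose {m l : ℕ} (hml : m ≤ l) : l ^ m ≤ m ^ m * l.choose m := by
  refine Nat.le_of_mul_le_mul_right ?_ m.factorial_pos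
  have h := pow_mul_descFactorial_le hml m
  rw [Nat.descFactorial_self, Nat.descFactorial_eq_factorial_mul_choose] at h
  linarith

theorem choose_two_mul_le_mul_choose_mul_choose {n l m : ℕ} (hml : m ≤ l)
    (hln : 2 * m * (l + m) ≤ n) (hpow : n ^ m ≤ n * l ^ m) :
    n.choose (2 * m) ≤ 2 * n * (l.choose m * (n - l).choose m) := by
  have hfact : m ^ m * m.factorial ≤ (2 * m).factorial := by
    rw [two_mul, mul_comm]
    exact (Nat.mul_le_mul_left _ (Nat.pow_le_pow_left m.le_succ m)).trans
      Nat.factorial_mul_pow_le_factorial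
  refine Nat.le_of_mul_le_mul_left ?_ (2 * m).factorial_pos
  calc (2 * m).factorial * n.choose (2 * m) = n.descFactorial (2 * m) :=
        (Nat.descFactorial_eq_factorial_mul_choose n (2 * m)).symm
    _ ≤ n ^ m * n ^ m := by
        rw [← pow_add, ← two_mul]
        exact Nat.descFactorial_le_pow n (2 * m)
    _ ≤ n * (m ^ m * l.choose m) * (2 * (n - l).descFactorial m) :=
        Nat.mul_le_mul (hpow.trans (Nat.mul_le_mul_left n (pow_le_pow_mul_choose hml)))
          (pow_le_two_mul_descFactorial_sub hln)
    _ = m ^ m * m.factorial * (2 * n * (l.choose m * (n - l).choose m)) := by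
        rw [Nat.descFactorial_eq_factorial_mul_choose]
        ring
    _ ≤ (2 * m).factorial * (2 * n * (l.choose m * (n - l).choose m)) := by gcongr

variable {α : Type*} [DecidableEq α]

theorem card_filter_card_inter_and_sdiff {U C : Finset α} (hCU : C ⊆ U) {l m : ℕ} (hml : m ≤ l)
    (P : Finset α → Prop) [DecidablePred P] :
    #{S ∈ powersetCard l U | #(S ∩ C) = m ∧ P (S \ C)} =
      (#C).choose m * #{R ∈ powersetCard (l - m) (U \ C) | P R} := by
  have hunion {A R : Finset α} (hA : A ⊆ C) (hR : R ⊆ U \ C) :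
      (A ∪ R) ∩ C = A ∧ (A ∪ R) \ C = R := by
    have hRC := (subset_sdiff.1 hR).2
    rw [union_inter_distrib_right, inter_eq_left.2 hA, disjoint_iff_inter_eq_empty.1 hRC,
      union_empty, union_sdiff_distrib, sdiff_eq_empty_iff_subset.2 hA, empty_union,
      sdiff_eq_self_of_disjoint hRC]
    exact ⟨rfl, rfl⟩
  rw [← card_powersetCard, ← card_product]
  refine card_nbij' (fun S => (S ∩ C, S \ C)) (fun A => A.1 ∪ A.2) (fun S hS => ?_)
    (fun A hA => ?_) (fun S _ => sup_inf_sdiff S C) (fun A hA => ?_) <;>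
    simp only [mem_coe, mem_filter, mem_product, mem_powersetCard] at *
  · have := card_inter_add_card_sdiff S C
    exact ⟨⟨inter_subset_right, hS.2.1⟩, ⟨sdiff_subset_sdiff hS.1.1 subset_rfl, by lia⟩, hS.2.2⟩
  · obtain ⟨⟨hAC, hAm⟩, ⟨hRU, hRl⟩, hR⟩ := hA
    obtain ⟨hinter, hsdiff⟩ := hunion hAC hRU
    refine ⟨⟨union_subset (hAC.trans hCU) (hRU.trans sdiff_subset), ?_⟩, by rwa [hinter],
      by rwa [hsdiff]⟩
    rw [card_union_of_disjoint ((subset_sdiff.1 hRU).2.symm.mono_left hAC)]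
    lia
  · exact Prod.ext (hunion hA.1.1 hA.2.1.1).1 (hunion hA.1.1 hA.2.1.1).2

theorem card_filter_card_inter {U C : Finset α} (hCU : C ⊆ U) {l m : ℕ} (hml : m ≤ l) :
    #{S ∈ powersetCard l U | #(S ∩ C) = m} =
      (#C).choose m * (#U - #C).choose (l - m) := by
  simpa [card_sdiff_of_subset hCU] using
    card_filter_card_inter_and_sdiff hCU hml fun _ => True

theorem card_filter_card_inter_mul_choose {U C : Finset α} (hCU : C ⊆ U) {l m : ℕ}
    (hC : #C = 2 * m) :
    #{S ∈ powersetCard l U | #(S ∩ C) = m} * (#U).choose (2 * m) =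
      (#U).choose l * l.choose m * (#U - l).choose m := by
  rcases le_or_gt m l with hml | hlm
  · rw [card_filter_card_inter hCU hml, hC, choose_mul_choose_mul_choose_two_mul hml]
  · have hempty : {S ∈ powersetCard l U | #(S ∩ C) = m} = ∅ := by
      refine filter_eq_empty_iff.2 fun S hS h => ?_
      have := card_le_card (inter_subset_left : S ∩ C ⊆ S)
      rw [mem_powersetCard] at hS
      lia
    simp [hempty, Nat.choose_eq_zero_of_lt hlm]

end Counting

section Degrees

/-- The number of `l`-element subsets of an `n`-element set that meet a fixed `2 * m`-element subset
in exactly `m` points. It is the number of edges (counted with orientation) that a hyperedge of size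
`2 * m` contributes to the Kikuchi graph of level `l`. -/
def balancedCount (n l m : ℕ) : ℕ := (2 * m).choose m * (n - 2 * m).choose (l - m)

theorem balancedCount_mul_choose (n : ℕ) {l m : ℕ} (hml : m ≤ l) :
    balancedCount n l m * n.choose (2 * m) = n.choose l * l.choose m * (n - l).choose m :=
  choose_mul_choose_mul_choose_two_mul hml

/-- The average degree of the Kikuchi graph of level `l` of a matching with `n` edges of size
`2 * m` on `n` vertices. This is only a normalization: a matching with `δ * n` edges has a Kikuchi
graph of average degree `δ * kikuchiDegree n l m`. -/
def kikuchiDegree (n l m : ℕ) : ℝ := n * balancedCount n l m / n.choose l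

theorem half_le_kikuchiDegree {n l m : ℕ} (hm : 0 < m) (hml : m ≤ l) (hln : 16 * m * l ≤ n)
    (hpow : n ^ m ≤ n * l ^ m) : 1 / 2 ≤ kikuchiDegree n l m := by
  have hchoose : 0 < n.choose (2 * m) := Nat.choose_pos (by nlinarith)
  have hcount : n.choose l ≤ 2 * n * balancedCount n l m := by
    refine Nat.le_of_mul_le_mul_right ?_ hchoose
    calc n.choose l * n.choose (2 * m)
        ≤ n.choose l * (2 * n * (l.choose m * (n - l).choose m)) :=
          Nat.mul_le_mul_left _
            (choose_two_mul_le_mul_choose_mul_choose hml (by nlinarith) hpow)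
      _ = 2 * n * balancedCount n l m * n.choose (2 * m) := by
          rw [mul_assoc (2 * n), balancedCount_mul_choose n hml]
          ring
  have hpos : (0 : ℝ) < n.choose l := Nat.cast_pos.2 (Nat.choose_pos (by nlinarith))
  rw [kikuchiDegree, div_le_div_iff₀ two_pos hpos, one_mul]
  calc (n.choose l : ℝ) ≤ 2 * n * balancedCount n l m := by exact_mod_cast hcount
    _ = n * balancedCount n l m * 2 := by ring

theorem card_inter_eq_iff_card_symmDiff_eq {α : Type*} [DecidableEq α] {S C : Finset α}
    {m : ℕ} (hC : #C = 2 * m) :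
    #(S ∩ C) = m ↔ #(S ∆ C) = #S := by
  have hsymm : #(S ∆ C) = #(S \ C) + #(C \ S) := card_union_of_disjoint disjoint_sdiff_sdiff
  have hS := card_inter_add_card_sdiff S C
  have hC' := card_inter_add_card_sdiff C S
  rw [inter_comm C S] at hC'
  lia

variable {α : Type*} [Fintype α] [DecidableEq α]

theorem card_filter_card_inter_two_mul {C : Finset α} {l m : ℕ} (hml : m ≤ l)
    (hC : #C = 2 * m) :
    #{S ∈ powersetCard l univ | #(S ∩ C) = m} = balancedCount (Fintype.card α) l m := by
  rw [card_filter_card_inter (subset_univ C) hml, hC, card_univ, balancedCount]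

theorem card_filter_card_inter_and_card_inter_mul_le {C C' : Finset α} {l m : ℕ} (hml : m ≤ l)
    (hm : 16 * m ^ 2 ≤ Fintype.card α) (hC : #C = 2 * m) (hC' : #C' = 2 * m)
    (hdisj : Disjoint C C') :
    #{S ∈ powersetCard l univ | #(S ∩ C) = m ∧ #(S ∩ C') = m} * (Fintype.card α).choose l ≤
      2 * balancedCount (Fintype.card α) l m ^ 2 := by
  set n := Fintype.card α
  set pairs := #{S ∈ powersetCard l univ | #(S ∩ C) = m ∧ #(S ∩ C') = m} with hpairs
  set D := balancedCount n l m with hD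
  have hcompl : #(univ \ C) = n - 2 * m := by rw [card_univ_sdiff, hC]
  have hfactor : pairs * (n - 2 * m).choose (2 * m) =
      D * ((l - m).choose m * (n - 2 * m - (l - m)).choose m) := by
    have hsdiff (S : Finset α) : S ∩ C' = (S \ C) ∩ C' := by
      rw [sdiff_inter_right_comm, inter_sdiff_assoc, hdisj.symm.sdiff_eq_left]
    have hfirst := card_filter_card_inter_and_sdiff (subset_univ C) hml fun R => #(R ∩ C') = m
    have hsecond := card_filter_card_inter_mul_choose (l := l - m)
      (subset_sdiff.2 ⟨subset_univ C', hdisj.symm⟩) hC'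
    simp only [← hsdiff] at hfirst
    rw [hcompl] at hsecond
    rw [hpairs, hfirst, mul_assoc, hsecond, hC, hD, balancedCount]
    ring
  have hpos : 0 < (n - 2 * m).choose (2 * m) :=
    Nat.choose_pos (by have := Nat.le_self_pow two_ne_zero m; lia)
  refine Nat.le_of_mul_le_mul_right ?_ hpos
  calc pairs * n.choose l * (n - 2 * m).choose (2 * m)
      = n.choose l * (D * ((l - m).choose m * (n - 2 * m - (l - m)).choose m)) := by
        rw [← hfactor]
        ring
    _ ≤ n.choose l * (D * (l.choose m * (n - l).choose m)) := by
        refine Nat.mul_le_mul_left _ (Nat.mul_le_mul_left _ (Nat.mul_le_mul ?_ ?_))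
        · exact Nat.choose_le_choose m (l.sub_le m)
        · exact Nat.choose_le_choose m (by lia)
    _ = D ^ 2 * n.choose (2 * m) := by
        rw [sq, mul_assoc, balancedCount_mul_choose n hml]
        ring
    _ ≤ D ^ 2 * (2 * (n - 2 * m).choose (2 * m)) := by gcongr; exact choose_two_mul_le hm
    _ = 2 * D ^ 2 * (n - 2 * m).choose (2 * m) := by ring

variable {H : Finset (Finset α)} {l m : ℕ}

theorem sum_kikuchiMatrix_powersetCard (hH : ∀ C ∈ H, #C = 2 * m)
    (S : (powersetCard l univ : Finset (Finset α))) :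
    ∑ T, kikuchiMatrix (powersetCard l univ) H S T = #{C ∈ H | #((S : Finset α) ∩ C) = m} := by
  rw [sum_kikuchiMatrix]
  congr 2
  refine filter_congr fun C hC => ?_
  rw [card_inter_eq_iff_card_symmDiff_eq (hH C hC), mem_powersetCard_univ,
    mem_powersetCard_univ.1 S.2]

theorem sum_sum_kikuchiMatrix_powersetCard (hml : m ≤ l) (hH : ∀ C ∈ H, #C = 2 * m) :
    ∑ S, ∑ T, kikuchiMatrix (powersetCard l univ) H S T =
      #H * balancedCount (Fintype.card α) l m := by
  simp only [sum_kikuchiMatrix_powersetCard hH]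
  rw [sum_coe_sort (powersetCard l univ) fun S => (#{C ∈ H | #(S ∩ C) = m} : ℝ)]
  have hcount := sum_card_bipartiteAbove_eq_sum_card_bipartiteBelow
    (s := powersetCard l univ) (t := H) fun S C => #(S ∩ C) = m
  simp only [bipartiteAbove, bipartiteBelow] at hcount
  rw [sum_congr rfl fun C hC => card_filter_card_inter_two_mul hml (hH C hC), sum_const,
    smul_eq_mul] at hcount
  exact_mod_cast hcount

theorem sum_card_filter_sq {ι σ : Type*} (s : Finset ι) (t : Finset σ) (r : ι → σ → Prop)
    [∀ i j, Decidable (r i j)] :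
    ∑ i ∈ s, #{j ∈ t | r i j} ^ 2 = ∑ j ∈ t, ∑ j' ∈ t, #{i ∈ s | r i j ∧ r i j'} := by
  simp only [sq, card_filter, sum_mul_sum, ite_and, ite_mul, one_mul, zero_mul]
  rw [sum_comm]
  exact sum_congr rfl fun j _ => sum_comm

theorem choose_mul_sum_sq_kikuchiMatrix_le (hml : m ≤ l) (hm : 16 * m ^ 2 ≤ Fintype.card α)
    (hH : ∀ C ∈ H, #C = 2 * m) (hdisj : (H : Set (Finset α)).Pairwise Disjoint) :
    (Fintype.card α).choose l *
        ∑ S, (∑ T, kikuchiMatrix (powersetCard l univ) H S T) ^ 2 ≤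
      (#H * balancedCount (Fintype.card α) l m : ℝ) *
        ((Fintype.card α).choose l + 2 * (#H * balancedCount (Fintype.card α) l m)) := by
  simp only [sum_kikuchiMatrix_powersetCard hH]
  rw [sum_coe_sort (powersetCard l univ) fun S => (#{C ∈ H | #(S ∩ C) = m} : ℝ) ^ 2]
  norm_cast
  set N := (Fintype.card α).choose l
  set D := balancedCount (Fintype.card α) l m
  rw [sum_card_filter_sq, mul_sum]
  have hrow (C) (hC : C ∈ H) :
      N * ∑ C' ∈ H, #{S ∈ powersetCard l univ | #(S ∩ C) = m ∧ #(S ∩ C') = m} ≤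
        N * D + #H * (2 * D ^ 2) := by
    rw [← add_sum_erase H _ hC, mul_add, mul_sum]
    refine add_le_add ?_ ?_
    · simp only [and_self, card_filter_card_inter_two_mul hml (hH C hC)]
      rfl
    · refine (sum_le_card_nsmul _ _ (2 * D ^ 2) fun C' hC' => ?_).trans
        (Nat.mul_le_mul_right _ card_erase_le)
      obtain ⟨hne, hC'H⟩ := mem_erase.1 hC'
      rw [mul_comm]
      exact card_filter_card_inter_and_card_inter_mul_le hml hm (hH C hC) (hH C' hC'H)
        (hdisj hC hC'H hne.symm)
  refine (sum_le_card_nsmul H _ _ hrow).trans_eq ?_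
  rw [smul_eq_mul]
  ring

theorem mul_choose_le_sum_sum_kikuchiMatrix {δ : ℝ} (hml : m ≤ l) (hl : l ≤ Fintype.card α)
    (hH : ∀ C ∈ H, #C = 2 * m) (hsize : δ * Fintype.card α ≤ #H) :
    δ * kikuchiDegree (Fintype.card α) l m * (Fintype.card α).choose l ≤
      ∑ S, ∑ T, kikuchiMatrix (powersetCard l univ) H S T := by
  have hpos : ((Fintype.card α).choose l : ℝ) ≠ 0 := Nat.cast_ne_zero.2 (Nat.choose_pos hl).ne'
  rw [sum_sum_kikuchiMatrix_powersetCard hml hH, mul_assoc, kikuchiDegree,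
    div_mul_cancel₀ _ hpos, ← mul_assoc]
  gcongr

theorem sum_sq_kikuchiMatrix_le (hml : m ≤ l) (hl : l ≤ Fintype.card α)
    (hm : 16 * m ^ 2 ≤ Fintype.card α) (hH : ∀ C ∈ H, #C = 2 * m)
    (hdisj : (H : Set (Finset α)).Pairwise Disjoint) (hcard : 2 * #H ≤ Fintype.card α) :
    ∑ S, (∑ T, kikuchiMatrix (powersetCard l univ) H S T) ^ 2 ≤
      (1 + kikuchiDegree (Fintype.card α) l m) *
        ∑ S, ∑ T, kikuchiMatrix (powersetCard l univ) H S T := by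
  have hpos : (0 : ℝ) < (Fintype.card α).choose l := Nat.cast_pos.2 (Nat.choose_pos hl)
  have hcard' : (2 * #H : ℝ) ≤ Fintype.card α := by exact_mod_cast hcard
  refine le_of_mul_le_mul_left ?_ hpos
  refine (choose_mul_sum_sq_kikuchiMatrix_le hml hm hH hdisj).trans ?_
  rw [sum_sum_kikuchiMatrix_powersetCard hml hH, kikuchiDegree, ← mul_assoc _ (1 + _),
    mul_one_add, mul_div_cancel₀ _ hpos.ne', mul_comm, ← mul_assoc 2]
  gcongr

end Degrees

theorem IsMatching.card_mul_le {n q : ℕ} {H : Finset (Finset (Fin n))} (hH : IsMatching q H) :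
    #H * q ≤ n := by
  rw [← sum_const_nat hH.1, ← card_biUnion hH.2]
  exact card_finset_fin_le _

namespace NormallyDecodable

variable {q k n m l : ℕ} {δ ε : ℝ} {Enc : (Fin k → Bool) → Fin n → Bool}

theorem mul_le_one (h : NormallyDecodable q k n δ ε Enc) (hk : 0 < k) (hn : 0 < n) :
    δ * q ≤ 1 := by
  obtain ⟨H, hmatch, hsize, -⟩ := h
  have hcard : (#(H ⟨0, hk⟩) * q : ℝ) ≤ n := by exact_mod_cast (hmatch ⟨0, hk⟩).card_mul_le
  have hq : δ * n * q ≤ #(H ⟨0, hk⟩) * q := by gcongr; exact hsize ⟨0, hk⟩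
  have hn' : (0 : ℝ) < n := by exact_mod_cast hn
  exact le_of_mul_le_mul_left (by linarith) hn'

/-- A single edge per message bit, with the Kikuchi graph on all subsets of `[n]`, is a perfect
matching. -/
theorem mul_sq_le_mul (h : NormallyDecodable q k n δ ε Enc) (hδ : 0 < δ) (hε : 0 ≤ ε)
    (hn : 0 < n) : k * ε ^ 2 ≤ 256 * n := by
  obtain ⟨H, -, hsize, hagree⟩ := h
  have hne (i : Fin k) : (H i).Nonempty := by
    have : (0 : ℝ) < #(H i) := lt_of_lt_of_le (by positivity) (hsize i)
    exact card_pos.1 (by exact_mod_cast this)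
  choose C hC using hne
  have hdeg (i : Fin k) (S : (univ : Finset (Finset (Fin n)))) :
      ∑ T, kikuchiMatrix univ {C i} S T = 1 := by
    rw [sum_kikuchiMatrix]
    simp
  have hlog : Real.log #(univ : Finset (Finset (Fin n))) ≤ n := by
    simp only [card_univ, Fintype.card_finset, Fintype.card_fin, Nat.cast_pow, Nat.cast_ofNat,
      Real.log_pow]
    exact mul_le_of_le_one_right (by positivity) (by linarith [Real.log_two_lt_d9])
  have hbound := card_mul_sq_le_of_kikuchiMatrix (V := univ) (H := fun i => {C i}) (x := Enc)
    (t := 4) (γ := 1) univ_nonempty four_pos zero_le_one hε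
    (fun i C' hC' => by
      rw [mem_singleton.1 hC', Fintype.card_fin]
      exact hagree i _ (hC i))
    (fun i => by
      simp only [hdeg, sum_const, card_univ, Fintype.card_coe, nsmul_eq_mul, mul_one, one_mul,
        le_refl])
    (fun i => by simp only [hdeg, one_pow, le_refl]) hn.ne' hlog
  rw [Fintype.card_fin] at hbound
  linarith

theorem mul_sq_mul_sq_le (h : NormallyDecodable q k n δ ε Enc) (hδ : 0 < δ) (hε : 0 ≤ ε)
    (hn : 0 < n) : k * (ε * δ) ^ 2 * q ^ 2 ≤ 256 * n := by
  rcases k.eq_zero_or_pos with rfl | hk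
  · simp
  calc k * (ε * δ) ^ 2 * q ^ 2 = k * ε ^ 2 * (δ * q) ^ 2 := by ring
    _ ≤ k * ε ^ 2 :=
        mul_le_of_le_one_right (by positivity) (pow_le_one₀ (by positivity) (h.mul_le_one hk hn))
    _ ≤ 256 * n := h.mul_sq_le_mul hδ hε hn

theorem mul_sq_le_of_level (h : NormallyDecodable (2 * m) k n δ ε Enc) (hδ : 0 ≤ δ) (hε : 0 ≤ ε)
    (hm : 0 < m) (hml : m ≤ l) (hln : 16 * m * l ≤ n) (hpow : n ^ m ≤ n * l ^ m) {p : ℕ}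
    (hp : p ≠ 0) (hlog : l * Real.log n ≤ p) : k * (ε * δ) ^ 2 ≤ 2304 * p := by
  obtain ⟨H, hmatch, hsize, hagree⟩ := h
  have hl : l ≤ n := by nlinarith
  have hmm : 16 * m ^ 2 ≤ n := by nlinarith
  have hcard (i : Fin k) : 2 * #(H i) ≤ Fintype.card (Fin n) := by
    rw [Fintype.card_fin]
    nlinarith [(hmatch i).card_mul_le]
  set a : ℝ := kikuchiDegree n l m
  have ha : 1 / 2 ≤ a := half_le_kikuchiDegree hm hml hln hpow
  have hV : #(powersetCard l (univ : Finset (Fin n))) = n.choose l := by simp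
  have hV0 : (powersetCard l (univ : Finset (Fin n))).Nonempty :=
    card_pos.1 (hV ▸ Nat.choose_pos hl)
  have hmass (i : Fin k) : δ * a * #(powersetCard l (univ : Finset (Fin n))) ≤
      ∑ S, ∑ T, kikuchiMatrix (powersetCard l univ) (H i) S T := by
    rw [hV]
    simpa only [Fintype.card_fin] using mul_choose_le_sum_sum_kikuchiMatrix hml
      (by rwa [Fintype.card_fin]) (hmatch i).1 (by rw [Fintype.card_fin]; exact hsize i)
  have hsq (i : Fin k) : 4 * ∑ S, (∑ T, kikuchiMatrix (powersetCard l univ) (H i) S T) ^ 2 ≤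
      4 * (1 + a) * ∑ S, ∑ T, kikuchiMatrix (powersetCard l univ) (H i) S T := by
    rw [mul_assoc]
    gcongr
    simpa only [Fintype.card_fin] using sum_sq_kikuchiMatrix_le hml (by rwa [Fintype.card_fin])
      (by rwa [Fintype.card_fin]) (hmatch i).1 (hmatch i).2 (hcard i)
  have hlogV : Real.log #(powersetCard l (univ : Finset (Fin n))) ≤ p := by
    rw [hV]
    exact (log_choose_le hl).trans hlog
  have hbound := card_mul_sq_le_of_kikuchiMatrix hV0 (by linarith) (by positivity) hε
    (fun i C hC => by rw [Fintype.card_fin]; exact hagree i C hC) hmass hsq hp hlogV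
  rw [Fintype.card_fin] at hbound
  refine le_of_mul_le_mul_right ?_ (by positivity : 0 < a ^ 2)
  calc k * (ε * δ) ^ 2 * a ^ 2 = k * (ε * (δ * a)) ^ 2 := by ring
    _ ≤ 16 * p * (4 * (1 + a)) ^ 2 := hbound
    _ ≤ 16 * p * (4 * (3 * a)) ^ 2 := by gcongr; linarith
    _ = 2304 * p * a ^ 2 := by ring

theorem mul_sq_le_mul_log (h : NormallyDecodable (2 * m) k n δ ε Enc) (hδ : 0 ≤ δ) (hε : 0 ≤ ε)
    (hm : 0 < m) (hml : m ≤ l) (hln : 16 * m * l ≤ n) (hpow : n ^ m ≤ n * l ^ m) :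
    k * (ε * δ) ^ 2 ≤ 4608 * (l * Real.log n) := by
  have hn : (16 : ℝ) ≤ n := by exact_mod_cast (by nlinarith : 16 ≤ n)
  have hl : (1 : ℝ) ≤ l := by exact_mod_cast hm.trans_le hml
  have hlog : 1 ≤ Real.log n := by
    rw [Real.le_log_iff_exp_le (by linarith)]
    linarith [Real.exp_one_lt_d9]
  have hllog : 1 ≤ l * Real.log n := one_le_mul_of_one_le_of_one_le hl hlog
  calc k * (ε * δ) ^ 2 ≤ 2304 * ⌈l * Real.log n⌉₊ :=
        h.mul_sq_le_of_level hδ hε hm hml hln hpow (Nat.ceil_pos.2 (by linarith)).ne'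
          (Nat.le_ceil _)
    _ ≤ 4608 * (l * Real.log n) := by
        linarith [Nat.ceil_lt_add_one (zero_le_one.trans hllog)]

theorem mul_sq_le_of_lt (h : NormallyDecodable (2 * m) k n δ ε Enc) (hδ : 0 < δ) (hε : 0 ≤ ε)
    (hm : 0 < m) (hn : 0 < n) {x : ℝ} (hx : n < 32 * m * x) : k * (ε * δ) ^ 2 ≤ 2048 * x := by
  have hm' : (1 : ℝ) ≤ m := by exact_mod_cast hm
  have hedge := h.mul_sq_mul_sq_le hδ hε hn
  push_cast at hedge
  calc k * (ε * δ) ^ 2 ≤ k * (ε * δ) ^ 2 * m := le_mul_of_one_le_right (by positivity) hm'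
    _ ≤ 2048 * x := by
      refine le_of_mul_le_mul_right ?_ (by linarith : (0 : ℝ) < m)
      linarith

end NormallyDecodable

theorem exists_level {m n : ℕ} (hm : 0 < m) (hn : 0 < n)
    (h : 32 * m * (n : ℝ) ^ (1 - 1 / (m : ℝ)) ≤ n) :
    ∃ l : ℕ, m ≤ l ∧ 16 * m * l ≤ n ∧ n ^ m ≤ n * l ^ m ∧
      (l : ℝ) ≤ 2 * (n : ℝ) ^ (1 - 1 / (m : ℝ)) := by
  set x : ℝ := (n : ℝ) ^ (1 - 1 / (m : ℝ))
  set y : ℝ := (n : ℝ) ^ (1 / (m : ℝ))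
  have hn' : (0 : ℝ) < n := by exact_mod_cast hn
  have hm' : (1 : ℝ) ≤ m := by exact_mod_cast hm
  have hx0 : 0 < x := Real.rpow_pos_of_pos hn' _
  have hxy : x * y = n := by rw [← Real.rpow_add hn', sub_add_cancel, Real.rpow_one]
  have hym : y ^ m = n := by
    simpa only [y, one_div] using Real.rpow_inv_natCast_pow hn'.le hm.ne'
  have hy : 32 * m ≤ y := le_of_mul_le_mul_right (by linarith) hx0
  have hx : x = y ^ (m - 1) := by
    refine mul_right_cancel₀ (by linarith : y ≠ 0) ?_
    rw [hxy, pow_sub_one_mul hm.ne', hym]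
  have hmx : (m : ℝ) ≤ x :=
    calc (m : ℝ) ≤ (2 : ℝ) ^ (m - 1) := by
          exact_mod_cast (by have := (m - 1).lt_two_pow_self; lia : m ≤ 2 ^ (m - 1))
      _ ≤ y ^ (m - 1) := by gcongr; linarith
      _ = x := hx.symm
  have hxm : (n : ℝ) ^ m = n * x ^ m := by
    rw [hx, ← pow_mul, mul_comm (m - 1), pow_mul, hym, mul_pow_sub_one hm.ne']
  have hceil : (⌈x⌉₊ : ℝ) ≤ 2 * x := by linarith [Nat.ceil_lt_add_one hx0.le]
  refine ⟨⌈x⌉₊, by exact_mod_cast hmx.trans (Nat.le_ceil x), ?_, ?_, hceil⟩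
  · have : (16 * m * ⌈x⌉₊ : ℝ) ≤ n := by
      refine le_trans ?_ h
      calc (16 * m * ⌈x⌉₊ : ℝ) ≤ 16 * m * (2 * x) := by gcongr
        _ = 32 * m * x := by ring
    exact_mod_cast this
  · have : (n : ℝ) ^ m ≤ n * ⌈x⌉₊ ^ m := by
      rw [hxm]
      gcongr
      exact Nat.le_ceil x
    exact_mod_cast this

/-- **Known LDC lower bound, even `q`.** There is an absolute constant `c > 0` such
that for every even `q ≥ 2`, `n ≥ 2`, and every `(q, δ, ε)`-normally decodable code
`Enc : {-1,1}^k → {-1,1}^n`, we have `k ≤ c · n^{1 - 2/q} · (log n) / (ε² δ²)`. -/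
theorem even_q_ldc_lower_bound :
    ∃ c : ℝ, 0 < c ∧
      ∀ (q k n : ℕ) (δ ε : ℝ) (Enc : (Fin k → Bool) → Fin n → Bool),
        2 ≤ q → Even q → 2 ≤ n → 0 < δ → 0 < ε →
        NormallyDecodable q k n δ ε Enc →
        (k : ℝ) ≤ c * (n : ℝ) ^ (1 - 2 / (q : ℝ)) * Real.log n / (ε ^ 2 * δ ^ 2) := by
  refine ⟨9216, by norm_num, fun q k n δ ε Enc hq heven hn hδ hε h => ?_⟩
  obtain ⟨m, rfl⟩ := heven.two_dvd
  have hm : 0 < m := by lia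
  have hexp : 1 - 2 / ((2 * m : ℕ) : ℝ) = 1 - 1 / (m : ℝ) := by
    push_cast
    field_simp
  rw [hexp, le_div_iff₀ (by positivity), ← mul_pow]
  set x : ℝ := (n : ℝ) ^ (1 - 1 / (m : ℝ))
  rcases le_or_gt (32 * m * x) n with hlarge | hsmall
  · obtain ⟨l, hml, hln, hpow, hlx⟩ := exists_level hm (by lia) hlarge
    calc k * (ε * δ) ^ 2 ≤ 4608 * (l * Real.log n) :=
          h.mul_sq_le_mul_log hδ.le hε.le hm hml hln hpow
      _ ≤ 4608 * (2 * x * Real.log n) := by gcongr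
      _ = 9216 * x * Real.log n := by ring
  · have hlog : 1 / 2 ≤ Real.log n :=
      calc 1 / 2 ≤ Real.log 2 := by linarith [Real.log_two_gt_d9]
        _ ≤ Real.log n := by gcongr; exact_mod_cast hn
    calc k * (ε * δ) ^ 2 ≤ 2048 * x := h.mul_sq_le_of_lt hδ hε.le hm (by lia) hsmall
      _ ≤ 9216 * x * (1 / 2) := by linarith [show 0 ≤ x by positivity]
      _ ≤ 9216 * x * Real.log n := by gcongr
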